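/- For every natural number n, the Legendre polynomial defined by the Rodrigues formula P_n(x) = (1/(2^n · n!)) · iteratedDeriv n (fun t => (t^2 - 1)^n) x satisfies ∫ x in (-1:ℝ)..1, (P_n x)^2 = 2 / (2 * n + 1). -/

import Mathlib

/-!
Write `q = (X ^ 2 - 1) ^ n`. The derivatives of `q` of order less than `n` vanish at `±1`, so `n`
integrations by parts (`integral_iterate_derivative_mul`) turn `∫ (q⁽ⁿ⁾)²` into
`(-1) ^ n ∫ q * q⁽²ⁿ⁾`. As `q` is monic of degree `2n`, the factor `q⁽²ⁿ⁾` is the constant `(2n)!`.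
The remaining integral `∫ (x ^ 2 - 1) ^ n` is a Wallis-type integral, evaluated in
`integral_sq_sub_one_pow` by the recursion that comes from integrating the derivative of
`x * (x ^ 2 - 1) ^ (n + 1)`.
-/

open Polynomial

lemma iteratedDeriv_polynomial_eval (p : ℝ[X]) (k : ℕ) :
    iteratedDeriv k (fun t : ℝ => p.eval t) = fun t => (derivative^[k] p).eval t := by
  induction k with
  | zero => simp
  | succ k ih =>
    rw [iteratedDeriv_succ, ih, Function.iterate_succ_apply']
    funext t
    exact Polynomial.deriv _

/-- Repeated integration by parts, without boundary terms when `q` vanishes to order `k` at both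
endpoints. -/
lemma integral_iterate_derivative_mul (a b : ℝ) (q : ℝ[X]) (k : ℕ)
    (ha : ∀ j < k, (derivative^[j] q).eval a = 0) (hb : ∀ j < k, (derivative^[j] q).eval b = 0)
    (r : ℝ[X]) :
    ∫ x in a..b, (derivative^[k] q).eval x * r.eval x =
      (-1) ^ k * ∫ x in a..b, q.eval x * (derivative^[k] r).eval x := by
  induction k generalizing r with
  | zero => simp
  | succ k ih =>
    have hparts := intervalIntegral.integral_deriv_mul_eq_sub_of_hasDerivAt
      (u := fun x => (derivative^[k] q).eval x) (v := fun x => r.eval x)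
      (u' := fun x => (derivative (derivative^[k] q)).eval x)
      (v' := fun x => (derivative r).eval x) (a := a) (b := b)
      (Polynomial.continuous _).continuousOn (Polynomial.continuous _).continuousOn
      (fun x _ => Polynomial.hasDerivAt _ x) (fun x _ => Polynomial.hasDerivAt _ x)
      ((Polynomial.continuous _).intervalIntegrable _ _)
      ((Polynomial.continuous _).intervalIntegrable _ _)
    have hint (s t : ℝ[X]) :
        IntervalIntegrable (fun x => s.eval x * t.eval x) MeasureTheory.volume a b :=
      (s.continuous.mul t.continuous).intervalIntegrable _ _
    rw [intervalIntegral.integral_add (hint _ _) (hint _ _),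
      ih (fun j hj => ha j (by lia)) (fun j hj => hb j (by lia)),
      ha k (by lia), hb k (by lia)] at hparts
    rw [Function.iterate_succ_apply', Function.iterate_succ_apply, pow_succ]
    linarith

lemma eval_iterate_derivative_sq_sub_one_pow {n j : ℕ} (hj : j < n) {x : ℝ} (hx : x ^ 2 = 1) :
    (derivative^[j] ((X ^ 2 - 1 : ℝ[X]) ^ n)).eval x = 0 := by
  obtain ⟨s, hs⟩ := pow_sub_dvd_iterate_derivative_pow (X ^ 2 - 1 : ℝ[X]) n j
  have : n - j ≠ 0 := by lia
  simp [hs, hx, this]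

lemma iterate_derivative_two_mul_sq_sub_one_pow (n : ℕ) :
    derivative^[2 * n] ((X ^ 2 - 1 : ℝ[X]) ^ n) = C ((2 * n).factorial : ℝ) := by
  have hmonic : (X ^ 2 - 1 : ℝ[X]).Monic := by monicity!
  have hdeg : ((X ^ 2 - 1 : ℝ[X]) ^ n).natDegree = 2 * n := by
    rw [hmonic.natDegree_pow, show (X ^ 2 - 1 : ℝ[X]).natDegree = 2 by compute_degree!, mul_comm]
  have hcoeff : ((X ^ 2 - 1 : ℝ[X]) ^ n).coeff (2 * n) = 1 := by
    rw [← hdeg]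
    exact hmonic.pow n
  have h0 := natDegree_iterate_derivative ((X ^ 2 - 1 : ℝ[X]) ^ n) (2 * n)
  rw [hdeg, Nat.sub_self, Nat.le_zero] at h0
  rw [eq_C_of_natDegree_eq_zero h0, coeff_iterate_derivative, zero_add, hcoeff,
    Nat.descFactorial_self, nsmul_one]

lemma integral_sq_sub_one_pow (n : ℕ) :
    ((2 * n + 1).factorial : ℝ) * ∫ x in (-1 : ℝ)..1, (x ^ 2 - 1) ^ n =
      (-1) ^ n * 2 * (2 ^ n * (n.factorial : ℝ)) ^ 2 := by
  induction n with
  | zero => norm_num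
  | succ n ih =>
    -- `(x (x² - 1)ⁿ⁺¹)' = (2n + 3) (x² - 1)ⁿ⁺¹ + (2n + 2) (x² - 1)ⁿ`
    have hrec := intervalIntegral.integral_eq_sub_of_hasDerivAt (a := -1) (b := 1)
      (f := fun x : ℝ => x * (x ^ 2 - 1) ^ (n + 1))
      (f' := fun x : ℝ => (2 * n + 3) * (x ^ 2 - 1) ^ (n + 1) + (2 * n + 2) * (x ^ 2 - 1) ^ n)
      (fun x _ => by
        have h := (hasDerivAt_id x).mul ((((hasDerivAt_id x).pow 2).sub_const 1).pow (n + 1))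
        refine h.congr_deriv ?_
        simp
        ring)
      ((by fun_prop : Continuous _).intervalIntegrable _ _)
    rw [intervalIntegral.integral_add ((by fun_prop : Continuous _).intervalIntegrable _ _)
      ((by fun_prop : Continuous _).intervalIntegrable _ _),
      intervalIntegral.integral_const_mul, intervalIntegral.integral_const_mul] at hrec
    norm_num at hrec
    rw [show 2 * (n + 1) + 1 = (2 * n + 1) + 1 + 1 by ring, Nat.factorial_succ,
      Nat.factorial_succ, Nat.factorial_succ n]
    push_cast
    linear_combination (2 * n + 2) * ((2 * n + 1).factorial : ℝ) * hrec - (2 * n + 2) ^ 2 * ih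

theorem stmt_11 (P : ℕ → ℝ → ℝ)
    (hP : ∀ (n : ℕ) (x : ℝ),
      P n x = (1 / (2 ^ n * (Nat.factorial n : ℝ))) *
        iteratedDeriv n (fun t : ℝ => (t ^ 2 - 1) ^ n) x)
    (n : ℕ) :
    ∫ x in (-1:ℝ)..1, (P n x) ^ 2 = 2 / (2 * n + 1) := by
  have hq : (fun t : ℝ => (t ^ 2 - 1) ^ n) = fun t => ((X ^ 2 - 1 : ℝ[X]) ^ n).eval t := by
    simp
  have hparts := integral_iterate_derivative_mul (-1) 1 ((X ^ 2 - 1 : ℝ[X]) ^ n) n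
    (fun j hj => eval_iterate_derivative_sq_sub_one_pow hj (by norm_num))
    (fun j hj => eval_iterate_derivative_sq_sub_one_pow hj (by norm_num))
    (derivative^[n] ((X ^ 2 - 1 : ℝ[X]) ^ n))
  rw [← Function.iterate_add_apply, ← two_mul, iterate_derivative_two_mul_sq_sub_one_pow] at hparts
  simp only [eval_C, intervalIntegral.integral_mul_const, eval_pow, eval_sub, eval_X,
    eval_one] at hparts
  have hJ := integral_sq_sub_one_pow n
  rw [Nat.factorial_succ] at hJ
  push_cast at hJ
  simp_rw [hP, hq, iteratedDeriv_polynomial_eval, mul_pow, intervalIntegral.integral_const_mul,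
    pow_two (eval _ _), hparts]
  have hsign : ((-1 : ℝ) ^ n) * (-1) ^ n = 1 := by rw [← mul_pow]; norm_num
  have hfac : (n.factorial : ℝ) ≠ 0 := by positivity
  field_simp
  linear_combination (-1) ^ n * hJ + 2 * (2 ^ n * (n.factorial : ℝ)) ^ 2 * hsign
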